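/- Let n ≥ 1 be an odd integer, A = 𝔽₂[x]/(x^{n+1}), and B = A ⊗_{𝔽₂} A. The graded ring HH^*(A;A) = ⊕_{m≥0} Ext^m_B(A,A), with the Yoneda (composition) product, is isomorphic as a graded ring to 𝔽₂[x,v,t]/(x^{n+1}, v² − ((n+1)/2)·t·x^{n−1}), where x, v, t have cohomological degrees 0, 1, 2 respectively and (n+1)/2 is reduced modulo 2. -/

import Mathlib

open Polynomial TensorProduct CategoryTheory

noncomputable section

/-- `A = 𝔽₂[x]/(x^{n+1})`, the truncated polynomial ring over `𝔽₂ = ℤ/2ℤ`. -/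
abbrev A (n : ℕ) : Type := AdjoinRoot ((X : (ZMod 2)[X]) ^ (n + 1))

/-- `B = A ⊗_{𝔽₂} A`. -/
abbrev B (n : ℕ) : Type := A n ⊗[ZMod 2] A n

/-- `A` is a `B`-module via the multiplication map `μ(a ⊗ b) = ab`. -/
instance (n : ℕ) : Algebra (B n) (A n) :=
  (Algebra.TensorProduct.lmul' (ZMod 2) (S := A n)).toRingHom.toAlgebra

instance (n : ℕ) : HasDerivedCategory.{1} (ModuleCat.{0} (B n)) :=
  HasDerivedCategory.standard _

instance (n : ℕ) : HasExt.{1} (ModuleCat.{0} (B n)) :=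
  hasExt_of_hasDerivedCategory _

/-- `A` as an object of the category of `B`-modules. -/
def M (n : ℕ) : ModuleCat.{0} (B n) := ModuleCat.of (B n) (A n)

/-- The ideal `(x^{n+1}, v² − ((n+1)/2)·t·x^{n−1})` of `𝔽₂[x,v,t]`, where `x = X 0`,
`v = X 1`, `t = X 2`, and `(n+1)/2` is reduced modulo `2`. -/
def I (n : ℕ) : Ideal (MvPolynomial (Fin 3) (ZMod 2)) :=
  Ideal.span {MvPolynomial.X 0 ^ (n + 1),
    MvPolynomial.X 1 ^ 2 -
      ((((n + 1) / 2 : ℕ) : MvPolynomial (Fin 3) (ZMod 2)) *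
        MvPolynomial.X 2 * MvPolynomial.X 0 ^ (n - 1))}

/-- The ring `𝔽₂[x,v,t]/(x^{n+1}, v² − ((n+1)/2)·t·x^{n−1})`. -/
abbrev R (n : ℕ) : Type := MvPolynomial (Fin 3) (ZMod 2) ⧸ I n

/-- The degree-`m` component of `R n`, for the grading in which `x, v, t` have
cohomological degrees `0, 1, 2` respectively. -/
def G (n m : ℕ) : Submodule (ZMod 2) (R n) :=
  (MvPolynomial.weightedHomogeneousSubmodule (ZMod 2) (![0, 1, 2] : Fin 3 → ℕ) m).map
    (Ideal.Quotient.mkₐ (ZMod 2) (I n)).toLinearMap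

/-!
Put `δ = 1 ⊗ x - x ⊗ 1`, so that `A = B/(δ)`. Inside `A[X]` one has
`X ^ (n + 1) = X ^ (n + 1) - x ^ (n + 1) = (X - x) N`, and since `n + 1` is even and `2 = 0`, the
cofactor is `N = (X - x) W` with `W(x) = ((n + 1) / 2) x ^ (n - 1)`. As `B = A[X]/(X ^ (n + 1))`,
the images `δ` and `δ w` of `X - x` and `N` generate each other's annihilators, which makes `A`
two-periodic over `B`. With `K = (δ)`, the resolution is spliced from `0 → K → B → A → 0` and
`0 → A → B → K → 0`, with classes `e₁` and `e₂`. Every map `B → A` vanishes on the submodules `K`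
and `A` of `B`, so composing with `e₁` or `e₂` is bijective in every degree, and `Ext(A, A)` is
generated over `A` by the products of `t = e₁ e₂` and `v = e₁ φ`, where `φ : K → A` sends `δ` to
`1`. There is `ψ : A → K` with `ψ φ = w` and `φ e₁ = e₂ ψ`, whence
`v v = e₁ φ e₁ φ = e₁ e₂ ψ φ = w t`. Composites are written in diagrammatic order.
-/

open Abelian

universe u' v u

/-! ### Extensions along a two-periodic resolution -/

section

variable {C : Type u} [Category.{v} C] [Abelian C] [HasExt.{u'} C]

lemma mk₀_comp_eq_zero_of_projective {X P Y : C} [Projective P] {f : X ⟶ P}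
    (hf : ∀ g : P ⟶ Y, f ≫ g = 0) {m : ℕ} (γ : Ext P Y m) :
    (Ext.mk₀ f).comp γ (zero_add m) = 0 := by
  cases m with
  | zero =>
    obtain ⟨g, rfl⟩ := (Ext.mk₀_bijective P Y).2 γ
    rw [Ext.mk₀_comp_mk₀, hf, Ext.mk₀_zero]
  | succ m => rw [Ext.eq_zero_of_projective γ, Ext.comp_zero]

lemma bijective_extClass_comp {E : ShortComplex C} (hE : E.ShortExact) [Projective E.X₂] {Y : C}
    (hf : ∀ g : E.X₂ ⟶ Y, E.f ≫ g = 0) {m m' : ℕ} (hm : 1 + m = m') :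
    Function.Bijective fun α : Ext E.X₁ Y m ↦ hE.extClass.comp α hm := by
  refine ⟨(injective_iff_map_eq_zero (hE.extClass.precomp Y hm)).2 fun α hα ↦ ?_, fun β ↦ ?_⟩
  · obtain ⟨γ, rfl⟩ := Ext.contravariant_sequence_exact₁ hE Y α hm hα
    exact mk₀_comp_eq_zero_of_projective hf γ
  · obtain rfl : m' = m + 1 := by lia
    exact Ext.contravariant_sequence_exact₃ hE Y β (Ext.eq_zero_of_projective _) hm

end

/-- A two-periodic resolution `⋯ → P → P → Z` of an object `Z`, recorded as two short exact
sequences `0 → K → P → Z → 0` and `0 → Z → P → K → 0` with projective middle term. By `p_comp_j`,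
one differential of `P` is `w` times the other, and by `exists_eq_smul_p`, the augmentation `p`
generates `Hom(P, Z)`; so `Ext(Z, Z)` has one generator in each degree. -/
structure PeriodicResolution (S : Type*) [CommRing S] {C : Type u} [Category.{v} C] [Abelian C]
    [Linear S C] (Z : C) (w : S) where
  P : C
  K : C
  i : K ⟶ P
  p : P ⟶ Z
  j : Z ⟶ P
  q : P ⟶ K
  i_comp_p : i ≫ p = 0
  j_comp_q : j ≫ q = 0
  shortExact_ip : (ShortComplex.mk i p i_comp_p).ShortExact
  shortExact_jq : (ShortComplex.mk j q j_comp_q).ShortExact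
  p_comp_j : p ≫ j = w • (q ≫ i)
  projective : Projective P
  exists_eq_smul_p : ∀ f : P ⟶ Z, ∃ s : S, f = s • p

namespace PeriodicResolution

variable {S : Type*} [CommRing S] {C : Type u} [Category.{v} C] [Abelian C] [Linear S C]
  {Z : C} {w : S} (D : PeriodicResolution S Z w)

attribute [instance] projective

instance : Epi D.p := D.shortExact_ip.epi_g

instance : Mono D.i := D.shortExact_ip.mono_f

instance : Epi D.q := D.shortExact_jq.epi_g

lemma j_comp_p : D.j ≫ D.p = 0 := by
  rw [← cancel_epi D.p, ← Category.assoc, D.p_comp_j, Linear.smul_comp, Category.assoc,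
    D.i_comp_p, Limits.comp_zero, smul_zero, Limits.comp_zero]

/-- The comparison map `K ⟶ Z` through which the augmentation `p` factors. -/
def φ : D.K ⟶ Z :=
  D.shortExact_jq.exact.desc (hk := D.j_comp_p)

lemma q_comp_φ : D.q ≫ D.φ = D.p := D.shortExact_jq.exact.g_desc D.p D.j_comp_p

/-- The comparison map `Z ⟶ K` through which the inclusion `j` factors. -/
def ψ : Z ⟶ D.K :=
  D.shortExact_ip.exact.lift D.j D.j_comp_p

lemma ψ_comp_i : D.ψ ≫ D.i = D.j := D.shortExact_ip.exact.lift_f D.j D.j_comp_p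

lemma p_comp_ψ : D.p ≫ D.ψ = w • D.q := by
  rw [← cancel_mono D.i, Category.assoc, ψ_comp_i, p_comp_j, Linear.smul_comp]

lemma φ_comp_ψ : D.φ ≫ D.ψ = w • 𝟙 D.K := by
  rw [← cancel_epi D.q, ← Category.assoc, q_comp_φ, p_comp_ψ, Linear.comp_smul, Category.comp_id]

lemma ψ_comp_φ : D.ψ ≫ D.φ = w • 𝟙 Z := by
  rw [← cancel_epi D.p, ← Category.assoc, p_comp_ψ, Linear.smul_comp, q_comp_φ, Linear.comp_smul,
    Category.comp_id]

lemma exists_eq_smul_id (D : PeriodicResolution S Z w) (f : Z ⟶ Z) : ∃ s : S, f = s • 𝟙 Z := by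
  obtain ⟨s, hs⟩ := D.exists_eq_smul_p (D.p ≫ f)
  refine ⟨s, ?_⟩
  rw [← cancel_epi D.p, hs, Linear.comp_smul, Category.comp_id]

lemma exists_eq_smul_φ (f : D.K ⟶ Z) : ∃ s : S, f = s • D.φ := by
  obtain ⟨s, hs⟩ := D.exists_eq_smul_p (D.q ≫ f)
  refine ⟨s, ?_⟩
  rw [← cancel_epi D.q, hs, Linear.comp_smul, q_comp_φ]

lemma smul_φ_eq_zero_iff (s : S) : s • D.φ = 0 ↔ s • 𝟙 Z = 0 := by
  rw [← cancel_epi D.q, ← cancel_epi D.p, Linear.comp_smul, Linear.comp_smul, q_comp_φ,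
    Category.comp_id, Limits.comp_zero, Limits.comp_zero]

lemma i_comp_eq_zero (f : D.P ⟶ Z) : D.i ≫ f = 0 := by
  obtain ⟨s, rfl⟩ := D.exists_eq_smul_p f
  rw [Linear.comp_smul, i_comp_p, smul_zero]

lemma j_comp_eq_zero (f : D.P ⟶ Z) : D.j ≫ f = 0 := by
  obtain ⟨s, rfl⟩ := D.exists_eq_smul_p f
  rw [Linear.comp_smul, j_comp_p, smul_zero]

variable [HasExt.{u'} C]

/-- The extension class of `0 → K → P → Z → 0`. -/
def extZK : Ext Z D.K 1 := D.shortExact_ip.extClass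

/-- The extension class of `0 → Z → P → K → 0`. -/
def extKZ : Ext D.K Z 1 := D.shortExact_jq.extClass

lemma extKZ_comp_ψ :
    D.extKZ.comp (Ext.mk₀ D.ψ) (add_zero 1) = (Ext.mk₀ D.φ).comp D.extZK (zero_add 1) :=
  ShortComplex.ShortExact.extClass_naturality D.shortExact_jq D.shortExact_ip
    { τ₁ := D.ψ
      τ₂ := 𝟙 D.P
      τ₃ := D.φ
      comm₁₂ := by simp [ψ_comp_i]
      comm₂₃ := by simp [q_comp_φ] }

lemma extZK_comp_φ :
    D.extZK.comp (Ext.mk₀ D.φ) (add_zero 1) = (Ext.mk₀ D.ψ).comp D.extKZ (zero_add 1) :=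
  ShortComplex.ShortExact.extClass_naturality D.shortExact_ip D.shortExact_jq
    { τ₁ := D.φ
      τ₂ := w • 𝟙 D.P
      τ₃ := D.ψ
      comm₁₂ := by
        simp [← ψ_comp_i, ← Category.assoc, φ_comp_ψ]
      comm₂₃ := by simp [p_comp_ψ] }

/-- The degree one class in `Ext(Z, Z)`: the class of `0 → K → P → Z → 0` pushed forward along
`φ : K ⟶ Z`. -/
def v : Ext Z Z 1 := D.extZK.comp (Ext.mk₀ D.φ) (add_zero 1)

/-- The degree two class in `Ext(Z, Z)`: the periodicity operator of the resolution, spliced from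
its two short exact sequences. -/
def t : Ext Z Z 2 := D.extZK.comp D.extKZ rfl

lemma φ_comp_v : (Ext.mk₀ D.φ).comp D.v (zero_add 1) = w • D.extKZ := by
  rw [v, ← Ext.comp_assoc (a₁₂ := 1) _ _ _ (zero_add 1) _ rfl, ← extKZ_comp_ψ,
    Ext.comp_assoc_of_second_deg_zero, Ext.mk₀_comp_mk₀, ψ_comp_φ, Ext.mk₀_smul,
    Ext.comp_smul, Ext.comp_mk₀_id]

lemma v_comp_v : D.v.comp D.v rfl = w • D.t := by
  rw [v, Ext.comp_assoc_of_second_deg_zero, ← v, φ_comp_v, Ext.comp_smul, t]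

lemma v_comp_t : D.v.comp D.t rfl = D.t.comp D.v rfl := by
  rw [v, t, Ext.comp_assoc_of_second_deg_zero,
    ← Ext.comp_assoc (a₁₂ := 1) (Ext.mk₀ D.φ) D.extZK _ (zero_add 1) rfl rfl, ← extKZ_comp_ψ,
    Ext.comp_assoc_of_second_deg_zero, ← extZK_comp_φ,
    Ext.comp_assoc (a₂₃ := 2) D.extZK D.extKZ _ rfl rfl rfl]

lemma bijective_extZK_comp {m m' : ℕ} (hm : 1 + m = m') :
    Function.Bijective fun β : Ext D.K Z m ↦ D.extZK.comp β hm :=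
  bijective_extClass_comp D.shortExact_ip D.i_comp_eq_zero hm

lemma bijective_extKZ_comp {m m' : ℕ} (hm : 1 + m = m') :
    Function.Bijective fun α : Ext Z Z m ↦ D.extKZ.comp α hm :=
  bijective_extClass_comp D.shortExact_jq D.j_comp_eq_zero hm

lemma bijective_t_comp (m : ℕ) :
    Function.Bijective fun α : Ext Z Z m ↦ D.t.comp α (add_comm 2 m) := by
  have t_comp : (fun α : Ext Z Z m ↦ D.t.comp α (add_comm 2 m)) =
      (fun β ↦ D.extZK.comp β (by lia)) ∘ fun α ↦ D.extKZ.comp α (add_comm 1 m) :=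
    funext fun α ↦ Ext.comp_assoc D.extZK D.extKZ α rfl _ (by lia)
  rw [t_comp]
  exact (D.bijective_extZK_comp _).comp (D.bijective_extKZ_comp _)

/-- The class `t ^ (m / 2) v ^ (m % 2)`, which generates `Ext(Z, Z)` in degree `m` over the
coefficient ring. -/
def generator : ∀ m : ℕ, Ext Z Z m
  | 0 => Ext.mk₀ (𝟙 Z)
  | 1 => D.v
  | m + 2 => D.t.comp (generator m) (add_comm 2 m)

lemma generator_comp_generator {a b c : ℕ} (h : a + b = c) :
    (D.generator a).comp (D.generator b) h = w ^ (a % 2 * (b % 2)) • D.generator c := by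
  induction a using Nat.twoStepInduction generalizing b c with
  | zero =>
    obtain rfl : b = c := by lia
    simp [generator]
  | one =>
    induction b using Nat.twoStepInduction generalizing c with
    | zero =>
      obtain rfl : 1 = c := by lia
      simp [generator]
    | one =>
      obtain rfl : 2 = c := by lia
      simpa [generator] using D.v_comp_v
    | more b ih _ =>
      obtain rfl : b + 1 + 2 = c := by lia
      rw [generator, generator, generator,
        ← Ext.comp_assoc (a₁₂ := 3) _ _ _ rfl _ (by lia), v_comp_t,
        Ext.comp_assoc (a₂₃ := b + 1) _ _ _ rfl (by lia) (by lia)]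
      have := ih (c := b + 1) (by lia)
      rw [generator] at this
      rw [this, Ext.comp_smul, Nat.add_mod_right]
  | more a ih _ =>
    obtain rfl : a + b + 2 = c := by lia
    rw [generator, generator, Ext.comp_assoc (a₂₃ := a + b) _ _ _ _ rfl (by lia), ih rfl,
      Ext.comp_smul, Nat.add_mod_right]

lemma exists_eq_smul_generator (m : ℕ) (α : Ext Z Z m) : ∃ s : S, α = s • D.generator m := by
  induction m using Nat.twoStepInduction with
  | zero =>
    obtain ⟨f, rfl⟩ := (Ext.mk₀_bijective _ _).2 α
    obtain ⟨s, rfl⟩ := D.exists_eq_smul_id f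
    exact ⟨s, Ext.mk₀_smul s _⟩
  | one =>
    obtain ⟨β, rfl⟩ := (D.bijective_extZK_comp (add_zero 1)).2 α
    obtain ⟨f, rfl⟩ := (Ext.mk₀_bijective _ _).2 β
    obtain ⟨s, rfl⟩ := D.exists_eq_smul_φ f
    exact ⟨s, by rw [Ext.mk₀_smul]; exact Ext.comp_smul ..⟩
  | more m ih _ =>
    obtain ⟨β, rfl⟩ := (D.bijective_t_comp m).2 α
    obtain ⟨s, rfl⟩ := ih β
    exact ⟨s, Ext.comp_smul ..⟩

lemma smul_generator_eq_zero_iff (m : ℕ) (s : S) : s • D.generator m = 0 ↔ s • 𝟙 Z = 0 := by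
  induction m using Nat.twoStepInduction with
  | zero => rw [generator, ← Ext.mk₀_smul, Ext.mk₀_eq_zero_iff]
  | one =>
    rw [generator, v, ← Ext.comp_smul, ← Ext.mk₀_smul, ← smul_φ_eq_zero_iff,
      ← Ext.mk₀_eq_zero_iff (s • D.φ)]
    simpa using (D.bijective_extZK_comp (add_zero 1)).1.eq_iff
      (a := Ext.mk₀ (s • D.φ)) (b := 0)
  | more m ih _ =>
    rw [generator, ← Ext.comp_smul, ← ih]
    simpa using (D.bijective_t_comp m).1.eq_iff (a := s • D.generator m) (b := 0)

end PeriodicResolution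

/-! ### Exact pairs of zero divisors -/

lemma exists_linearMap_comp_eq {S X Y Y' : Type*} [CommRing S] [AddCommGroup X] [Module S X]
    [AddCommGroup Y] [Module S Y] [AddCommGroup Y'] [Module S Y'] {f : X →ₗ[S] Y}
    {g : X →ₗ[S] Y'} (hf : Function.Surjective f) (h : f.ker ≤ g.ker) :
    ∃ e : Y →ₗ[S] Y', ∀ x, e (f x) = g x := by
  refine ⟨f.ker.liftQ g h ∘ₗ (f.quotKerEquivOfSurjective hf).symm, fun x ↦ ?_⟩
  simp [LinearMap.quotKerEquivOfSurjective_symm_apply]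

lemma exists_linearEquiv_comp_eq {S X Y Y' : Type*} [CommRing S] [AddCommGroup X]
    [Module S X] [AddCommGroup Y] [Module S Y] [AddCommGroup Y'] [Module S Y'] {f : X →ₗ[S] Y}
    {g : X →ₗ[S] Y'} (hf : Function.Surjective f) (hg : Function.Surjective g)
    (h : f.ker = g.ker) : ∃ e : Y ≃ₗ[S] Y', ∀ x, e (f x) = g x := by
  obtain ⟨e, he⟩ := exists_linearMap_comp_eq hf h.le
  refine ⟨LinearEquiv.ofBijective e
    ⟨(injective_iff_map_eq_zero e).2 fun y hy ↦ ?_, fun z ↦ ?_⟩, he⟩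
  · obtain ⟨x, rfl⟩ := hf y
    exact h.ge ((he x).symm.trans hy)
  · obtain ⟨x, rfl⟩ := hg z
    exact ⟨f x, he x⟩

/-- An exact pair of zero divisors: each of `y` and `z` generates the annihilator of the other. -/
structure IsExactPair {S : Type*} [CommRing S] (y z : S) : Prop where
  left_mul_eq_zero_iff (s : S) : y * s = 0 ↔ z ∣ s
  right_mul_eq_zero_iff (s : S) : z * s = 0 ↔ y ∣ s

section

variable {S L : Type u} [CommRing S] [CommRing L] [Algebra S L]

lemma IsExactPair.exists_exact {y z : S} (h : IsExactPair y z)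
    (hL : Function.Surjective (algebraMap S L)) (hy : ∀ s, algebraMap S L s = 0 ↔ y ∣ s) :
    ∃ (j : L →ₗ[S] S) (q : S →ₗ[S] (Algebra.linearMap S L).ker),
      (∀ s, j (algebraMap S L s) = z * s) ∧ (∀ s, (q s : S) = y * s) ∧
      Function.Injective j ∧ Function.Exact j q ∧ Function.Surjective q := by
  obtain ⟨j, hj⟩ : ∃ j : L →ₗ[S] S, ∀ s, j (algebraMap S L s) = z * s :=
    exists_linearMap_comp_eq (f := Algebra.linearMap S L) (g := LinearMap.mulLeft S z) hL
      fun s hs ↦ (h.right_mul_eq_zero_iff s).2 ((hy s).1 hs)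
  let q : S →ₗ[S] (Algebra.linearMap S L).ker :=
    (LinearMap.mulLeft S y).codRestrict _ fun s ↦ (hy _).2 (dvd_mul_right y s)
  refine ⟨j, q, hj, fun s ↦ rfl, (injective_iff_map_eq_zero j).2 fun l hl ↦ ?_, fun s ↦ ?_, ?_⟩
  · obtain ⟨s, rfl⟩ := hL l
    exact (hy s).2 ((h.right_mul_eq_zero_iff s).1 ((hj s).symm.trans hl))
  · rw [← Submodule.coe_eq_zero]
    refine (h.left_mul_eq_zero_iff s).trans ⟨?_, ?_⟩
    · rintro ⟨r, rfl⟩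
      exact ⟨algebraMap S L r, hj r⟩
    · rintro ⟨l, rfl⟩
      obtain ⟨r, rfl⟩ := hL l
      exact ⟨r, hj r⟩
  · rintro ⟨s, hs⟩
    obtain ⟨r, rfl⟩ := (hy s).1 hs
    exact ⟨r, rfl⟩

variable {δ w : S}

lemma IsExactPair.nonempty_periodicResolution (h : IsExactPair δ (δ * w))
    (hL : Function.Surjective (algebraMap S L)) (hδ : ∀ s, algebraMap S L s = 0 ↔ δ ∣ s) :
    Nonempty (PeriodicResolution S (ModuleCat.of S L) w) := by
  obtain ⟨j, q, hj, hq, j_injective, j_exact_q, q_surjective⟩ := h.exists_exact hL hδ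
  exact ⟨{
    P := ModuleCat.of S S
    K := ModuleCat.of S (Algebra.linearMap S L).ker
    i := ModuleCat.ofHom (Algebra.linearMap S L).ker.subtype
    p := ModuleCat.ofHom (Algebra.linearMap S L)
    j := ModuleCat.ofHom j
    q := ModuleCat.ofHom q
    i_comp_p := (Algebra.linearMap S L).shortComplexKer.zero
    j_comp_q := ModuleCat.hom_ext j_exact_q.linearMap_comp_eq_zero
    shortExact_ip := LinearMap.shortExact_shortComplexKer hL
    shortExact_jq := ModuleCat.shortComplex_shortExact _ j_exact_q j_injective q_surjective
    p_comp_j := by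
      refine ModuleCat.hom_ext (LinearMap.ext_ring ?_)
      change j (algebraMap S L 1) = w * (q 1 : S)
      rw [hj, hq]
      ring
    projective := ModuleCat.projective_of_free (Module.Basis.singleton Unit S)
    exists_eq_smul_p := fun f ↦ by
      obtain ⟨s, hs⟩ := hL (f 1)
      refine ⟨s, ModuleCat.hom_ext (LinearMap.ext_ring ?_)⟩
      change f 1 = s • algebraMap S L 1
      rw [← hs, map_one, Algebra.algebraMap_eq_smul_one] }⟩

lemma smul_id_eq_zero_iff_algebraMap_eq_zero (s : S) :
    s • 𝟙 (ModuleCat.of S L) = 0 ↔ algebraMap S L s = 0 := by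
  refine ⟨fun hs ↦ ?_, fun hs ↦ ModuleCat.hom_ext (LinearMap.ext fun l ↦ ?_)⟩
  · rw [Algebra.algebraMap_eq_smul_one]
    exact congr($hs 1)
  · change s • l = 0
    rw [Algebra.smul_def, hs, zero_mul]

theorem IsExactPair.exists_linearEquiv_ext [HasExt.{u'} (ModuleCat.{u} S)]
    (h : IsExactPair δ (δ * w)) (hL : Function.Surjective (algebraMap S L))
    (hδ : ∀ s, algebraMap S L s = 0 ↔ δ ∣ s) :
    ∃ E : ∀ m, L ≃ₗ[S] Ext (ModuleCat.of S L) (ModuleCat.of S L) m,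
      E 0 1 = Ext.mk₀ (𝟙 _) ∧ ∀ a b x y, (E a x).comp (E b y) rfl =
        E (a + b) (x * y * algebraMap S L w ^ (a % 2 * (b % 2))) := by
  obtain ⟨D⟩ := h.nonempty_periodicResolution hL hδ
  have exists_equiv (m : ℕ) : ∃ e : L ≃ₗ[S] Ext (ModuleCat.of S L) (ModuleCat.of S L) m,
      ∀ s, e (algebraMap S L s) = s • D.generator m := by
    refine exists_linearEquiv_comp_eq (f := Algebra.linearMap S L)
      (g := LinearMap.toSpanSingleton S _ (D.generator m)) hL (fun α ↦ ?_)
      (Submodule.ext fun s ↦ ?_)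
    · obtain ⟨s, rfl⟩ := D.exists_eq_smul_generator m α
      exact ⟨s, rfl⟩
    · exact (smul_id_eq_zero_iff_algebraMap_eq_zero s).symm.trans
        (D.smul_generator_eq_zero_iff m s).symm
  choose E hE using exists_equiv
  refine ⟨E, ?_, fun a b x y ↦ ?_⟩
  · rw [← map_one (algebraMap S L), hE, one_smul, PeriodicResolution.generator]
  · obtain ⟨r, rfl⟩ := hL x
    obtain ⟨s, rfl⟩ := hL y
    rw [← map_mul, ← map_pow, ← map_mul, hE, hE, hE, Ext.smul_comp, Ext.comp_smul,
      D.generator_comp_generator rfl, smul_smul, smul_smul, mul_assoc]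

end

/-! ### Tensoring with a monogenic algebra -/

section

variable {P S : Type*} [CommRing P] [CommRing S] {f : P →+* S} {p q : P}

lemma map_mul_eq_zero_iff_map_dvd (hf : Function.Surjective f)
    (hker : ∀ r, f r = 0 ↔ p * q ∣ r) (hp : IsRegular p) (s : S) : f p * s = 0 ↔ f q ∣ s := by
  obtain ⟨r, rfl⟩ := hf s
  refine ⟨fun hr ↦ ?_, ?_⟩
  · obtain ⟨c, hc⟩ := (hker _).1 ((map_mul f p r).trans hr)
    exact map_dvd f ⟨c, hp.left (hc.trans (mul_assoc p q c))⟩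
  · rintro ⟨s, hs⟩
    rw [hs, ← mul_assoc, ← map_mul, (hker _).2 dvd_rfl, zero_mul]

lemma isExactPair_map (hf : Function.Surjective f) (hker : ∀ r, f r = 0 ↔ p * q ∣ r)
    (hpq : IsRegular (p * q)) : IsExactPair (f p) (f q) where
  left_mul_eq_zero_iff := map_mul_eq_zero_iff_map_dvd hf hker (isRegular_mul_iff.1 hpq).1
  right_mul_eq_zero_iff :=
    map_mul_eq_zero_iff_map_dvd hf (by simpa only [mul_comm p q] using hker)
      (isRegular_mul_iff.1 hpq).2

end

section

variable {k : Type*} [CommRing k] (L : Type*) [CommRing L] [Algebra k L] (f : k[X])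

/-- The presentation of `L ⊗[k] k[X]/(f)` as a quotient of `L[X]`, sending `X` to `1 ⊗ X`. -/
def aevalRoot : L[X] →ₐ[L] L ⊗[k] AdjoinRoot f :=
  aeval (1 ⊗ₜ AdjoinRoot.root f)

lemma aevalRoot_map (p : k[X]) :
    aevalRoot L f (p.map (algebraMap k L)) = 1 ⊗ₜ AdjoinRoot.mk f p := by
  rw [aevalRoot, aeval_map_algebraMap, ← Algebra.TensorProduct.includeRight_apply,
    aeval_algHom_apply, AdjoinRoot.aeval_eq, Algebra.TensorProduct.includeRight_apply]

lemma aevalRoot_surjective : Function.Surjective (aevalRoot L f) := by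
  intro s
  induction s with
  | zero => exact ⟨0, map_zero _⟩
  | add s s' hs hs' =>
    obtain ⟨r, rfl⟩ := hs
    obtain ⟨r', rfl⟩ := hs'
    exact ⟨r + r', map_add ..⟩
  | tmul l m =>
    obtain ⟨p, rfl⟩ := AdjoinRoot.mk_surjective m
    refine ⟨l • p.map (algebraMap k L), ?_⟩
    rw [map_smul, aevalRoot_map, TensorProduct.smul_tmul', smul_eq_mul, mul_one]

lemma aevalRoot_eq_zero_iff (r : L[X]) : aevalRoot L f r = 0 ↔ f.map (algebraMap k L) ∣ r := by
  refine ⟨fun hr ↦ ?_, ?_⟩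
  · let f' := f.map (algebraMap k L)
    let ρ : AdjoinRoot f →ₐ[k] AdjoinRoot f' :=
      AdjoinRoot.liftAlgHom f (Algebra.ofId k _) (AdjoinRoot.root f') (by
        change aeval _ f = 0
        rw [← aeval_map_algebraMap L, AdjoinRoot.aeval_eq, AdjoinRoot.mk_self])
    let θ : L ⊗[k] AdjoinRoot f →ₐ[L] AdjoinRoot f' :=
      Algebra.TensorProduct.lift (Algebra.ofId L _) ρ fun _ _ ↦ .all ..
    have θ_aevalRoot : θ.comp (aevalRoot L f) = AdjoinRoot.mkₐ f' := by
      ext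
      simp [θ, ρ, aevalRoot]
    rw [← AdjoinRoot.mk_eq_zero]
    calc AdjoinRoot.mk f' r = θ (aevalRoot L f r) := congr($θ_aevalRoot.symm r)
      _ = 0 := by rw [hr, map_zero]
  · rintro ⟨c, rfl⟩
    rw [map_mul, aevalRoot_map, AdjoinRoot.mk_self, TensorProduct.tmul_zero, zero_mul]

end

section

variable {k : Type*} [CommRing k] (f : k[X])

lemma lmul'_aevalRoot (r : (AdjoinRoot f)[X]) :
    Algebra.TensorProduct.lmul' k (aevalRoot (AdjoinRoot f) f r) = r.eval (AdjoinRoot.root f) := by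
  let μ : AdjoinRoot f ⊗[k] AdjoinRoot f →ₐ[AdjoinRoot f] AdjoinRoot f :=
    Algebra.TensorProduct.lmul'' k
  have μ_root : μ (1 ⊗ₜ AdjoinRoot.root f) = AdjoinRoot.root f :=
    (Algebra.TensorProduct.lmul'_apply_tmul ..).trans (one_mul _)
  change μ (aeval _ r) = _
  rw [← aeval_algHom_apply, μ_root, coe_aeval_eq_eval]

lemma lmul'_eq_zero_iff (s : AdjoinRoot f ⊗[k] AdjoinRoot f) :
    Algebra.TensorProduct.lmul' k s = 0 ↔
      aevalRoot (AdjoinRoot f) f (X - C (AdjoinRoot.root f)) ∣ s := by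
  obtain ⟨r, rfl⟩ := aevalRoot_surjective _ f s
  refine ⟨fun hr ↦ map_dvd _ ?_, ?_⟩
  · rwa [dvd_iff_isRoot, IsRoot, ← lmul'_aevalRoot]
  · rintro ⟨c, hc⟩
    rw [hc, map_mul, lmul'_aevalRoot, eval_sub, eval_X, eval_C, sub_self, zero_mul]

end

lemma exists_X_pow_eq_X_sub_C_mul {L : Type*} [CommRing L] [CharP L 2] (a : L) (j : ℕ)
    (ha : a ^ (2 * (j + 1)) = 0) :
    ∃ W : L[X], X ^ (2 * (j + 1)) = (X - C a) * ((X - C a) * W) ∧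
      W.eval a = (j + 1 : ℕ) * a ^ (2 * j) := by
  refine ⟨∑ i ∈ Finset.range (j + 1), (X ^ 2) ^ i * (C a ^ 2) ^ (j - i), ?_, ?_⟩
  · have sub_sq : (X ^ 2 - C a ^ 2 : L[X]) = (X - C a) ^ 2 := (sub_pow_char ..).symm
    have := (Commute.all (X ^ 2 : L[X]) (C a ^ 2)).mul_geom_sum₂ (j + 1)
    rw [sub_sq, ← pow_mul, ← pow_mul, ← C_pow, ← C_pow, ha, C_0, sub_zero,
      Nat.add_sub_cancel, pow_two (X - C a), mul_assoc] at this
    rw [← this, C_pow]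
  · have (i : ℕ) (hi : i ∈ Finset.range (j + 1)) :
        ((X ^ 2) ^ i * (C a ^ 2) ^ (j - i) : L[X]).eval a = a ^ (2 * j) := by
      simp only [eval_mul, eval_pow, eval_X, eval_C]
      rw [← pow_add, ← pow_mul, Nat.add_sub_cancel' (Finset.mem_range_succ_iff.1 hi)]
    rw [eval_finsetSum, Finset.sum_congr rfl this, Finset.sum_const, Finset.card_range,
      nsmul_eq_mul]

/-- The coefficient `((n + 1) / 2) x ^ (n - 1)` of `t` in `v ^ 2`, as an element of `A n`. -/
def vSqCoeff (n : ℕ) : A n :=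
  ((n + 1) / 2 : ℕ) * AdjoinRoot.root ((X : (ZMod 2)[X]) ^ (n + 1)) ^ (n - 1)

lemma A.root_pow (n : ℕ) : (AdjoinRoot.root ((X : (ZMod 2)[X]) ^ (n + 1))) ^ (n + 1) = 0 := by
  rw [← AdjoinRoot.mk_X, ← map_pow, AdjoinRoot.mk_self]

instance (n : ℕ) : Nontrivial (A n) :=
  AdjoinRoot.nontrivial _ (by simp [Nat.cast_add_one_ne_zero])

instance (n : ℕ) : CharP (A n) 2 :=
  charP_of_injective_algebraMap (algebraMap (ZMod 2) (A n)).injective 2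

lemma B.algebraMap_surjective (n : ℕ) : Function.Surjective (algebraMap (B n) (A n)) :=
  fun a ↦ ⟨a ⊗ₜ 1, mul_one a⟩

lemma B.exists_isExactPair {n : ℕ} (hodd : Odd n) :
    ∃ δ w : B n, IsExactPair δ (δ * w) ∧ (∀ s, algebraMap (B n) (A n) s = 0 ↔ δ ∣ s) ∧
      algebraMap (B n) (A n) w = vSqCoeff n := by
  obtain ⟨j, rfl⟩ := hodd
  obtain ⟨W, hW, hWa⟩ := exists_X_pow_eq_X_sub_C_mul (AdjoinRoot.root _) j (A.root_pow (2 * j + 1))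
  let Φ := aevalRoot (A (2 * j + 1)) ((X : (ZMod 2)[X]) ^ (2 * j + 1 + 1))
  have Φ_eq_zero_iff (r : (A (2 * j + 1))[X]) : Φ r = 0 ↔ X ^ (2 * (j + 1)) ∣ r := by
    rw [aevalRoot_eq_zero_iff, Polynomial.map_pow, map_X]
    rfl
  rw [hW] at Φ_eq_zero_iff
  refine ⟨Φ (X - C (AdjoinRoot.root _)), Φ W, ?_, lmul'_eq_zero_iff _, ?_⟩
  · rw [← map_mul]
    refine isExactPair_map (f := Φ.toRingHom) (aevalRoot_surjective _ _) Φ_eq_zero_iff ?_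
    rw [← hW]
    exact (monic_X_pow _).isRegular
  · refine (lmul'_aevalRoot _ _).trans ?_
    rw [hWa, vSqCoeff]
    congr 2
    lia

/-! ### The ring presented by `x`, `v` and `t` -/

section

variable {T : Type*} [CommMonoid T]

/-- The normal form `t ^ (m / 2) v ^ (m % 2)` of the degree `m` monomials in `v` and `t`, of degrees
`1` and `2`, modulo a relation `v ^ 2 = c t`. -/
def normalMonomial (v t : T) (m : ℕ) : T := t ^ (m / 2) * v ^ (m % 2)

variable {v t c : T}

lemma pow_mul_pow_eq_mul_normalMonomial (hv : v ^ 2 = c * t) (i j : ℕ) :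
    v ^ i * t ^ j = c ^ (i / 2) * normalMonomial v t (i + 2 * j) := by
  calc v ^ i * t ^ j = (v ^ 2) ^ (i / 2) * v ^ (i % 2) * t ^ j := by
        rw [← pow_mul, ← pow_add, Nat.div_add_mod]
    _ = c ^ (i / 2) * (t ^ (i / 2 + j) * v ^ (i % 2)) := by
        rw [hv, mul_pow, pow_add, mul_assoc, mul_assoc, mul_assoc, mul_comm (v ^ _)]
    _ = c ^ (i / 2) * normalMonomial v t (i + 2 * j) := by
        rw [normalMonomial, Nat.add_mul_div_left _ _ two_pos, Nat.add_mul_mod_self_left]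

lemma normalMonomial_mul_normalMonomial (hv : v ^ 2 = c * t) (a b : ℕ) :
    normalMonomial v t a * normalMonomial v t b =
      c ^ (a % 2 * (b % 2)) * normalMonomial v t (a + b) := by
  have carry : (a % 2 + b % 2) / 2 = a % 2 * (b % 2) := by
    rcases a.mod_two_eq_zero_or_one with ha | ha <;>
      rcases b.mod_two_eq_zero_or_one with hb | hb <;> rw [ha, hb]
  have degree : a % 2 + b % 2 + 2 * (a / 2 + b / 2) = a + b := by lia
  rw [normalMonomial, normalMonomial, mul_mul_mul_comm, ← pow_add, ← pow_add, mul_comm,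
    pow_mul_pow_eq_mul_normalMonomial hv, carry, degree]

end

lemma eq_zero_of_algebraMap_mul_omega_pow_eq_zero {T : Type*} [CommRing T] {c d r : T} (m : ℕ)
    (h : algebraMap T (QuadraticAlgebra T c d) r * QuadraticAlgebra.omega ^ (m % 2) = 0) :
    r = 0 := by
  rcases m.mod_two_eq_zero_or_one with hm | hm <;> rw [hm] at h
  · simpa using congr(($h).re)
  · simpa using congr(($h).im)

namespace R

variable (n : ℕ)

/-- The class of `x` in `R n`, of degree `0`. -/
def x : R n := Ideal.Quotient.mk (I n) (MvPolynomial.X 0)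

/-- The class of `v` in `R n`, of degree `1`. -/
def v : R n := Ideal.Quotient.mk (I n) (MvPolynomial.X 1)

/-- The class of `t` in `R n`, of degree `2`. -/
def t : R n := Ideal.Quotient.mk (I n) (MvPolynomial.X 2)

lemma x_pow : x n ^ (n + 1) = 0 :=
  Ideal.Quotient.eq_zero_iff_mem.2 (Ideal.subset_span (.inl rfl))

/-- The structure map of `R n` as an algebra over `A n`, sending `x` to `x`. -/
def ofA : A n →ₐ[ZMod 2] R n :=
  AdjoinRoot.liftAlgHom _ (Algebra.ofId _ _) (x n) (by
    rw [eval₂_pow, eval₂_X, x_pow])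

lemma ofA_root : ofA n (AdjoinRoot.root _) = x n := AdjoinRoot.liftAlgHom_root ..

lemma v_sq : v n ^ 2 = ofA n (vSqCoeff n) * t n := by
  have : v n ^ 2 = ((n + 1) / 2 : ℕ) * t n * x n ^ (n - 1) :=
    Ideal.Quotient.eq.2 (Ideal.subset_span (.inr rfl))
  rw [this, vSqCoeff, map_mul, map_natCast, map_pow, ofA_root]
  ring

lemma component_eq_span (m : ℕ) : G n m = Submodule.span (ZMod 2)
    ((fun d : Fin 3 →₀ ℕ ↦ x n ^ d 0 * (v n ^ d 1 * t n ^ d 2)) '' {d | d 1 + 2 * d 2 = m}) := by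
  rw [G, MvPolynomial.weightedHomogeneousSubmodule_eq_finsupp_supported,
    AddMonoidAlgebra.supported_eq_span_single, Submodule.map_span, Set.image_image]
  have weight_eq (d : Fin 3 →₀ ℕ) : Finsupp.weight ![0, 1, 2] d = d 1 + 2 * d 2 := by
    simp [Finsupp.weight_apply, Finsupp.sum_fintype, Fin.sum_univ_three, mul_comm]
  have mk_monomial (d : Fin 3 →₀ ℕ) : Ideal.Quotient.mk (I n) (MvPolynomial.monomial d 1) =
      x n ^ d 0 * (v n ^ d 1 * t n ^ d 2) := by
    simp [MvPolynomial.monomial_eq, Finsupp.prod_fintype, Fin.prod_univ_three, x, v, t, mul_assoc]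
  simp only [weight_eq, ← mk_monomial]
  rfl

/-- The `A n`-multiples of the normal monomial of degree `m`, which make up the degree `m` component
of `R n`. -/
def toComponent (m : ℕ) : A n →ₗ[ZMod 2] R n :=
  LinearMap.mulRight (ZMod 2) (normalMonomial (v n) (t n) m) ∘ₗ (ofA n).toLinearMap

lemma toComponent_apply (m : ℕ) (a : A n) :
    toComponent n m a = ofA n a * normalMonomial (v n) (t n) m := rfl

lemma range_toComponent (m : ℕ) : (toComponent n m).range = G n m := by
  rw [component_eq_span]
  refine le_antisymm ?_ (Submodule.span_le.2 ?_)
  · rintro _ ⟨a, rfl⟩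
    obtain ⟨p, rfl⟩ := AdjoinRoot.mk_surjective a
    have ofA_mk : ofA n (AdjoinRoot.mk _ p) = aeval (x n) p := by
      rw [← AdjoinRoot.aeval_eq, ← aeval_algHom_apply, ofA_root]
    rw [toComponent_apply, ofA_mk, aeval_eq_sum_range, Finset.sum_mul]
    refine sum_mem fun i _ ↦ ?_
    rw [smul_mul_assoc]
    refine Submodule.smul_mem _ _ (Submodule.subset_span ⟨Finsupp.equivFunOnFinite.symm
      ![i, m % 2, m / 2], Nat.mod_add_div m 2, ?_⟩)
    simp [normalMonomial, mul_comm]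
  · rintro _ ⟨d, rfl, rfl⟩
    refine ⟨AdjoinRoot.root _ ^ d 0 * vSqCoeff n ^ (d 1 / 2), ?_⟩
    simp only [pow_mul_pow_eq_mul_normalMonomial (v_sq n), toComponent_apply, map_mul, map_pow,
      ofA_root, mul_assoc]

/-- The ring `A[t][v]/(v ^ 2 - c t)` with `c = ((n + 1) / 2) x ^ (n - 1)`, in which `t` is the
polynomial variable and `v` is `QuadraticAlgebra.omega`. It is free over `A[t]` on `1` and `v`,
which is how normal monomials are shown to be independent over `A`. -/
abbrev QuadraticModel : Type := QuadraticAlgebra (A n)[X] (C (vSqCoeff n) * X) 0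

/-- The map from the presented ring to its quadratic model that preserves `x`, `v` and `t`. -/
def toQuadraticModel : R n →ₐ[ZMod 2] QuadraticModel n :=
  Ideal.Quotient.liftₐ (I n)
    (MvPolynomial.aeval ![algebraMap (A n) _ (AdjoinRoot.root _), QuadraticAlgebra.omega,
      algebraMap (A n)[X] _ X]) (by
    change I n ≤ RingHom.ker _
    rw [I, Ideal.span_le]
    have root_pow : algebraMap (A n) (QuadraticModel n) (AdjoinRoot.root _) ^ (n + 1) = 0 := by
      rw [← map_pow, A.root_pow, map_zero]
    have algebraMap_vSqCoeff : algebraMap (A n)[X] (QuadraticModel n) (C (vSqCoeff n)) =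
        ((n + 1) / 2 : ℕ) * algebraMap (A n) _ (AdjoinRoot.root _) ^ (n - 1) := by
      rw [← map_pow, ← map_natCast (algebraMap (A n) _), ← map_mul]
      rfl
    rintro _ (rfl | rfl)
    · simp [root_pow]
    · simp [pow_two, QuadraticAlgebra.omega_mul_omega_eq_algebraMap, algebraMap_vSqCoeff,
        mul_right_comm])

lemma toQuadraticModel_x :
    toQuadraticModel n (x n) = algebraMap (A n) _ (AdjoinRoot.root _) :=
  MvPolynomial.aeval_X ..

lemma toQuadraticModel_v : toQuadraticModel n (v n) = QuadraticAlgebra.omega :=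
  MvPolynomial.aeval_X ..

lemma toQuadraticModel_t : toQuadraticModel n (t n) = algebraMap (A n)[X] _ X :=
  MvPolynomial.aeval_X ..

lemma toQuadraticModel_ofA (a : A n) :
    toQuadraticModel n (ofA n a) = algebraMap (A n)[X] _ (C a) := by
  have : (toQuadraticModel n).comp (ofA n) = IsScalarTower.toAlgHom _ (A n) _ :=
    AdjoinRoot.algHom_ext (by
      rw [AlgHom.comp_apply, ofA_root, toQuadraticModel_x, IsScalarTower.coe_toAlgHom'])
  exact congr($this a)

lemma toComponent_injective (m : ℕ) : Function.Injective (toComponent n m) := by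
  refine (injective_iff_map_eq_zero _).2 fun a ha ↦ ?_
  have : algebraMap (A n)[X] (QuadraticModel n) (C a * X ^ (m / 2)) *
      QuadraticAlgebra.omega ^ (m % 2) = 0 := by
    rw [← map_zero (toQuadraticModel n), ← ha, toComponent_apply, normalMonomial]
    simp only [toQuadraticModel_ofA, toQuadraticModel_t, toQuadraticModel_v, mul_assoc, map_mul,
      map_pow]
  simpa using congr(coeff $(eq_zero_of_algebraMap_mul_omega_pow_eq_zero m this) (m / 2))

/-- The degree `m` component of `R n` as the free `A n`-module on the normal monomial, linear only
over `ZMod 2` because `R n` carries no `A n`-module instance. -/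
def componentEquiv (m : ℕ) : A n ≃ₗ[ZMod 2] G n m :=
  LinearEquiv.ofInjective (toComponent n m) (toComponent_injective n m) ≪≫ₗ
    LinearEquiv.ofEq _ _ (range_toComponent n m)

lemma coe_componentEquiv (m : ℕ) (a : A n) :
    (componentEquiv n m a : R n) = ofA n a * normalMonomial (v n) (t n) m := rfl

lemma componentEquiv_zero_one : (componentEquiv n 0 1 : R n) = 1 := by
  simp [coe_componentEquiv, normalMonomial]

lemma componentEquiv_mul_componentEquiv (a b : ℕ) (y z : A n) :
    (componentEquiv n a y * componentEquiv n b z : R n) =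
      componentEquiv n (a + b) (y * z * vSqCoeff n ^ (a % 2 * (b % 2))) := by
  simp only [coe_componentEquiv, map_mul, map_pow]
  rw [mul_mul_mul_comm, normalMonomial_mul_normalMonomial (v_sq n), mul_assoc (_ * _)]

end R

/-- for odd `n ≥ 1` and `A = 𝔽₂[x]/(x^{n+1})`, the graded ring
`HH^*(A;A) = ⊕ₘ Ext^m_B(A,A)` with the Yoneda (composition) product is isomorphic as a
graded ring to `𝔽₂[x,v,t]/(x^{n+1}, v² − ((n+1)/2)·t·x^{n−1})` with `x, v, t` in degrees
`0, 1, 2`. -/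
theorem stmt12 (n : ℕ) (hn : 1 ≤ n) (hodd : Odd n) :
    ∃ e : ∀ m : ℕ, Abelian.Ext (M n) (M n) m ≃+ G n m,
      ((e 0 (Abelian.Ext.mk₀ (𝟙 (M n))) : R n) = 1) ∧
      ∀ (a b : ℕ) (α : Abelian.Ext (M n) (M n) a) (β : Abelian.Ext (M n) (M n) b),
        ((e (a + b) (α.comp β rfl) : R n) = (e a α : R n) * (e b β : R n)) := by
  obtain ⟨δ, w, pair, ker_mul, mul_w⟩ := B.exists_isExactPair hodd
  obtain ⟨E, E_one, E_comp⟩ : ∃ E : ∀ m, A n ≃ₗ[B n] Ext (M n) (M n) m,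
      E 0 1 = Ext.mk₀ (𝟙 (M n)) ∧ ∀ a b x y, (E a x).comp (E b y) rfl =
        E (a + b) (x * y * algebraMap (B n) (A n) w ^ (a % 2 * (b % 2))) :=
    pair.exists_linearEquiv_ext (B.algebraMap_surjective n) ker_mul
  let e (m : ℕ) : Ext (M n) (M n) m ≃+ G n m :=
    (E m).symm.toAddEquiv.trans (R.componentEquiv n m).toAddEquiv
  have e_E (m : ℕ) (y : A n) : e m (E m y) = R.componentEquiv n m y :=
    congrArg (R.componentEquiv n m) ((E m).symm_apply_apply y)
  refine ⟨e, ?_, fun a b α β ↦ ?_⟩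
  · rw [← E_one, e_E, R.componentEquiv_zero_one]
  · obtain ⟨y, rfl⟩ := (E a).surjective α
    obtain ⟨z, rfl⟩ := (E b).surjective β
    rw [E_comp, mul_w, e_E, e_E, e_E, R.componentEquiv_mul_componentEquiv]

end
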